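/- For every n ≥ 4, the Euler characteristic of the Gallai simplicial complex of the wheel graph W_{n+1} is χ(Δ_Γ(W_{n+1})) = 1. -/

import Mathlib

/-!
Write `h = n + 1` for the hub. An edge of the wheel is never one all of whose incident edges form
a triangle with it, so every Gallai index is a triple. A triple whose middle vertex is the hub is
`{a, b, h}` with `a, b` non-adjacent rim vertices; a triple whose middle vertex lies on the rim
must avoid the hub, hence consists of three consecutive rim vertices (`mem_gallai_wheel`).
There are `C(n,2) - n` triples of the first kind and `n` of the second, `C(n,2)` in all
(`card_hubTriples_union_rimTriples`). Every pair of vertices lies in one of these triples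
(`exists_triple_of_ne`), so the complex has the full 1-skeleton on `n + 1` vertices, and
`χ = (n + 1) - C(n+1,2) + C(n,2) = 1`.
-/

open Finset

/-- The simplicial complex generated by a set `S` of finsets:
its faces are the subsets of members of `S`. -/
def complexOf {V : Type*} (S : Set (Finset V)) : Set (Finset V) :=
  {F | ∃ A ∈ S, F ⊆ A}

/-- The set of line indices of a graph `G`: triples `{i,j,k}` coming from two
distinct incident edges `{i,j}`, `{j,k}` of `G`, together with pairs `{i,j}`
for edges of `G` sharing no vertex with any other edge. -/
def lineIndices {V : Type*} [DecidableEq V] (G : SimpleGraph V) : Set (Finset V) :=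
  {F | (∃ i j k, G.Adj i j ∧ G.Adj j k ∧ i ≠ k ∧ F = {i, j, k}) ∨
       (∃ i j, G.Adj i j ∧ (∀ k, G.Adj i k → k = j) ∧ (∀ k, G.Adj j k → k = i) ∧
          F = {i, j})}

/-- The set of Gallai indices of a graph `G`: triples `{i,j,k}` coming from two
distinct incident edges `{i,j}`, `{j,k}` of `G` not spanning a triangle, together
with pairs `{i,j}` for edges of `G` all of whose incident edges form a triangle
with `{i,j}`. -/
def gallaiIndices {V : Type*} [DecidableEq V] (G : SimpleGraph V) : Set (Finset V) :=
  {F | (∃ i j k, G.Adj i j ∧ G.Adj j k ∧ i ≠ k ∧ ¬ G.Adj i k ∧ F = {i, j, k}) ∨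
       (∃ i j, G.Adj i j ∧ (∀ k, k ≠ j → G.Adj i k → G.Adj j k) ∧
          (∀ k, k ≠ i → G.Adj j k → G.Adj i k) ∧ F = {i, j})}

/-- The set of anti-Gallai indices of a graph `G`: the vertex sets of
triangles of `G`. -/
def antiGallaiIndices {V : Type*} [DecidableEq V] (G : SimpleGraph V) : Set (Finset V) :=
  {F | ∃ i j k, G.Adj i j ∧ G.Adj j k ∧ G.Adj i k ∧ F = {i, j, k}}

/-- The line simplicial complex of `G`. -/
def lineComplex {V : Type*} [DecidableEq V] (G : SimpleGraph V) : Set (Finset V) :=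
  complexOf (lineIndices G)

/-- The Gallai simplicial complex of `G`. -/
def gallaiComplex {V : Type*} [DecidableEq V] (G : SimpleGraph V) : Set (Finset V) :=
  complexOf (gallaiIndices G)

/-- The anti-Gallai simplicial complex of `G`. -/
def antiGallaiComplex {V : Type*} [DecidableEq V] (G : SimpleGraph V) : Set (Finset V) :=
  complexOf (antiGallaiIndices G)

/-- The facets (maximal faces) of a simplicial complex. -/
def facets {V : Type*} (Δ : Set (Finset V)) : Set (Finset V) :=
  {F | F ∈ Δ ∧ ∀ G ∈ Δ, F ⊆ G → F = G}

/-- A simplicial complex is connected if any two facets are linked by a chain of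
facets in which consecutive facets intersect. -/
def ComplexConnected {V : Type*} [DecidableEq V] (Δ : Set (Finset V)) : Prop :=
  ∀ F ∈ facets Δ, ∀ F' ∈ facets Δ, ∃ (q : ℕ) (f : ℕ → Finset V),
    f 0 = F ∧ f q = F' ∧ (∀ i ≤ q, f i ∈ facets Δ) ∧
    ∀ i < q, (f i ∩ f (i + 1)).Nonempty

/-- The Euler characteristic `χ(Δ) = ∑ₖ (-1)ᵏ αₖ`, where `αₖ` is the number of
faces of `Δ` with exactly `k+1` vertices. -/
noncomputable def eulerChar {V : Type*} (Δ : Set (Finset V)) : ℤ :=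
  ∑ᶠ k : ℕ, (-1 : ℤ) ^ k * ({F ∈ Δ | F.card = k + 1}.ncard : ℤ)

/-- A simplicial complex is shellable if its facets can be enumerated
`F_0, …, F_{s-1}` so that for each `0 < i` the subcomplex
`⟨F_0, …, F_{i-1}⟩ ∩ ⟨F_i⟩` is pure of dimension `dim Fᵢ - 1`. -/
def Shellable {V : Type*} (Δ : Set (Finset V)) : Prop :=
  ∃ (s : ℕ) (l : Fin s → Finset V),
    Function.Injective l ∧
    (∀ i, l i ∈ facets Δ) ∧
    (∀ F ∈ facets Δ, ∃ i, F = l i) ∧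
    ∀ i : Fin s, 0 < (i : ℕ) →
      ∀ F ∈ facets {H | H ⊆ l i ∧ ∃ j, j < i ∧ H ⊆ l j}, F.card + 1 = (l i).card

/-- The wheel graph `W_{n+1}` on vertices `1, …, n+1` (hub `n+1`). -/
def wheelGraph (n : ℕ) : SimpleGraph ℕ :=
  SimpleGraph.fromRel (fun a b =>
    (1 ≤ a ∧ a + 1 ≤ n ∧ b = a + 1) ∨ (a = n ∧ b = 1) ∨
    (1 ≤ a ∧ a ≤ n ∧ b = n + 1))

/-- The friendship graph `F_n` on vertices `1, …, 2n+1` (center `2n+1`). -/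
def friendshipGraph (n : ℕ) : SimpleGraph ℕ :=
  SimpleGraph.fromRel (fun a b =>
    (∃ i, 1 ≤ i ∧ i ≤ n ∧ a = 2 * i - 1 ∧ b = 2 * i) ∨
    (1 ≤ a ∧ a ≤ 2 * n ∧ b = 2 * n + 1))

/-- The star graph `S_m` on vertices `1, …, m+1` (center `m+1`). -/
def starGraph (m : ℕ) : SimpleGraph ℕ :=
  SimpleGraph.fromRel (fun a b => 1 ≤ a ∧ a ≤ m ∧ b = m + 1)

/-- The cycle `C₅` on vertices `1, …, 5`. -/
def cycleFive : SimpleGraph ℕ :=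
  SimpleGraph.fromRel (fun a b =>
    (a = 1 ∧ b = 2) ∨ (a = 2 ∧ b = 3) ∨ (a = 3 ∧ b = 4) ∨
    (a = 4 ∧ b = 5) ∨ (a = 5 ∧ b = 1))

/-- The stacked prism graph `Y_{3,n}` on vertices `1, …, 3n`. -/
def prismGraph (n : ℕ) : SimpleGraph ℕ :=
  SimpleGraph.fromRel (fun a b =>
    (∃ k, k < n ∧ ((a = 3 * k + 1 ∧ b = 3 * k + 2) ∨
       (a = 3 * k + 2 ∧ b = 3 * k + 3) ∨ (a = 3 * k + 1 ∧ b = 3 * k + 3))) ∨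
    (∃ k j, k + 2 ≤ n ∧ 1 ≤ j ∧ j ≤ 3 ∧ a = 3 * k + j ∧ b = 3 * (k + 1) + j))

/-! ### The two families of triples -/

/-- The vertex following `a` on the rim `1, …, n`, cyclically. -/
def rimSucc (n a : ℕ) : ℕ := if a = n then 1 else a + 1

/-- The edges of the rim. -/
def rimEdges (n : ℕ) : Finset (Finset ℕ) :=
  (Icc 1 n).image fun a => {a, rimSucc n a}

/-- The triples formed by the hub and two non-adjacent rim vertices. -/
def hubTriples (n : ℕ) : Finset (Finset ℕ) :=
  (powersetCard 2 (Icc 1 n) \ rimEdges n).image (insert (n + 1))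

/-- The triples of consecutive rim vertices. -/
def rimTriples (n : ℕ) : Finset (Finset ℕ) :=
  (Icc 1 n).image fun a => {a, rimSucc n a, rimSucc n (rimSucc n a)}

lemma wheel_adj_iff {n : ℕ} (hn : 4 ≤ n) (a b : ℕ) :
    (wheelGraph n).Adj a b ↔
      (1 ≤ a ∧ a ≤ n ∧ 1 ≤ b ∧ b ≤ n ∧ (b = rimSucc n a ∨ a = rimSucc n b)) ∨
      (1 ≤ a ∧ a ≤ n ∧ b = n + 1) ∨ (1 ≤ b ∧ b ≤ n ∧ a = n + 1) := by
  simp only [wheelGraph, SimpleGraph.fromRel_adj, rimSucc]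
  split_ifs <;> omega

lemma pair_mem_rimEdges {n a b : ℕ} (hn : 4 ≤ n) :
    ({a, b} : Finset ℕ) ∈ rimEdges n ↔
      1 ≤ a ∧ a ≤ n ∧ 1 ≤ b ∧ b ≤ n ∧ (b = rimSucc n a ∨ a = rimSucc n b) := by
  simp only [rimEdges, mem_image, mem_Icc]
  constructor
  · rintro ⟨c, hc, h⟩
    have h1 : c ∈ ({a, b} : Finset ℕ) := by simp [← h]
    have h2 : rimSucc n c ∈ ({a, b} : Finset ℕ) := by simp [← h]
    have h3 : a ∈ ({c, rimSucc n c} : Finset ℕ) := by simp [h]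
    have h4 : b ∈ ({c, rimSucc n c} : Finset ℕ) := by simp [h]
    simp only [mem_insert, mem_singleton, rimSucc] at *
    split_ifs at * <;> omega
  · rintro ⟨ha, ha', hb, hb', rfl | rfl⟩
    · exact ⟨a, ⟨ha, ha'⟩, rfl⟩
    · exact ⟨b, ⟨hb, hb'⟩, pair_comm _ _⟩

lemma insert_hub_mem_hubTriples {n a b : ℕ} (hn : 4 ≤ n) (ha : 1 ≤ a) (ha' : a ≤ n)
    (hb : 1 ≤ b) (hb' : b ≤ n) (hab : a ≠ b)
    (h1 : b ≠ rimSucc n a) (h2 : a ≠ rimSucc n b) :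
    ({n + 1, a, b} : Finset ℕ) ∈ hubTriples n := by
  refine mem_image_of_mem _ (mem_sdiff.2 ⟨?_, ?_⟩)
  · simp only [mem_powersetCard, insert_subset_iff, singleton_subset_iff, mem_Icc]
    exact ⟨⟨⟨ha, ha'⟩, hb, hb'⟩, card_pair hab⟩
  · rw [pair_mem_rimEdges hn]
    tauto

lemma exists_of_mem_hubTriples {n : ℕ} (hn : 4 ≤ n) {F : Finset ℕ} (hF : F ∈ hubTriples n) :
    ∃ a b, 1 ≤ a ∧ a ≤ n ∧ 1 ≤ b ∧ b ≤ n ∧ a ≠ b ∧ b ≠ rimSucc n a ∧ a ≠ rimSucc n b ∧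
      F = {n + 1, a, b} := by
  obtain ⟨P, hP, rfl⟩ := mem_image.1 hF
  obtain ⟨hP, hR⟩ := mem_sdiff.1 hP
  obtain ⟨hsub, hcard⟩ := mem_powersetCard.1 hP
  obtain ⟨a, b, hab, rfl⟩ := card_eq_two.1 hcard
  rw [pair_mem_rimEdges hn] at hR
  simp only [insert_subset_iff, singleton_subset_iff, mem_Icc] at hsub
  exact ⟨a, b, by tauto⟩

lemma rimTriple_mem {n a : ℕ} (ha : 1 ≤ a) (ha' : a ≤ n) :
    ({a, rimSucc n a, rimSucc n (rimSucc n a)} : Finset ℕ) ∈ rimTriples n :=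
  mem_image.2 ⟨a, mem_Icc.2 ⟨ha, ha'⟩, rfl⟩

/-! ### The Gallai indices of the wheel -/

lemma rimSucc_spec {n a : ℕ} (ha : a ≤ n) :
    (a = n ∧ rimSucc n a = 1) ∨ (a < n ∧ rimSucc n a = a + 1) := by
  simp only [rimSucc]
  split_ifs <;> omega

/-- The vertex two steps along the rim from `a` is not adjacent to `a`, but is adjacent to both
the successor of `a` and the hub. For `n = 3` it would be adjacent to `a`. -/
lemma two_steps {n a : ℕ} (hn : 4 ≤ n) (ha : 1 ≤ a) (ha' : a ≤ n) :
    rimSucc n (rimSucc n a) ≠ a ∧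
    ¬ (wheelGraph n).Adj a (rimSucc n (rimSucc n a)) ∧
    (wheelGraph n).Adj (rimSucc n a) (rimSucc n (rimSucc n a)) ∧
    (wheelGraph n).Adj (n + 1) (rimSucc n (rimSucc n a)) := by
  have h1 := rimSucc_spec ha'
  have h2 := rimSucc_spec (n := n) (a := rimSucc n a) (by omega)
  have h3 := rimSucc_spec (n := n) (a := rimSucc n (rimSucc n a)) (by omega)
  refine ⟨?_, ?_, ?_, ?_⟩ <;> (try rw [wheel_adj_iff hn]) <;> omega

lemma triple_reverse (a b c : ℕ) : ({a, b, c} : Finset ℕ) = {c, b, a} := by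
  ext x
  simp only [mem_insert, mem_singleton]
  tauto

/-- The Gallai indices of the wheel. Pairs contribute nothing: for `n ≥ 4` every edge is incident
to some edge with which it does not span a triangle. -/
lemma mem_gallai_wheel {n : ℕ} (hn : 4 ≤ n) (F : Finset ℕ) :
    F ∈ gallaiIndices (wheelGraph n) ↔ F ∈ hubTriples n ∪ rimTriples n := by
  rw [mem_union]
  constructor
  · rintro (⟨i, j, k, hij, hjk, hik, hn', rfl⟩ | ⟨i, j, hij, h1, h2, rfl⟩)
    · rw [wheel_adj_iff hn] at hij hjk hn'
      by_cases hj : j = n + 1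
      · subst hj
        left
        rw [insert_comm]
        apply insert_hub_mem_hubTriples hn <;> omega
      · right
        have hr : 1 ≤ i ∧ i ≤ n ∧ 1 ≤ k ∧ k ≤ n := by omega
        have hi := rimSucc_spec hr.2.1
        have hk := rimSucc_spec hr.2.2.2
        have hs : (j = rimSucc n i ∧ k = rimSucc n j) ∨ (j = rimSucc n k ∧ i = rimSucc n j) := by
          have hij' : j = rimSucc n i ∨ i = rimSucc n j := by omega
          have hjk' : k = rimSucc n j ∨ j = rimSucc n k := by omega
          clear hij hjk hn'
          omega
        rcases hs with ⟨rfl, rfl⟩ | ⟨rfl, rfl⟩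
        · exact rimTriple_mem hr.1 hr.2.1
        · rw [triple_reverse]
          exact rimTriple_mem hr.2.2.1 hr.2.2.2
    · -- Two steps along the rim from `i` lies a non-neighbour of `i`; it is a neighbour of `j` if
      -- `j` is the hub or follows `i`. The other cases exchange `i` and `j`.
      exfalso
      rcases (wheel_adj_iff hn i j).1 hij with
        ⟨hi, hi', hj, hj', rfl | rfl⟩ | ⟨hi, hi', rfl⟩ | ⟨hj, hj', rfl⟩
      · obtain ⟨hne, hnot, hadj, -⟩ := two_steps hn hi hi'
        exact hnot (h2 _ hne hadj)
      · obtain ⟨hne, hnot, hadj, -⟩ := two_steps hn hj hj'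
        exact hnot (h1 _ hne hadj)
      · obtain ⟨hne, hnot, -, hadj⟩ := two_steps hn hi hi'
        exact hnot (h2 _ hne hadj)
      · obtain ⟨hne, hnot, -, hadj⟩ := two_steps hn hj hj'
        exact hnot (h1 _ hne hadj)
  · rintro (hF | hF)
    · obtain ⟨a, b, ha, ha', hb, hb', hab, h1, h2, rfl⟩ := exists_of_mem_hubTriples hn hF
      refine Or.inl ⟨a, n + 1, b, ?_, ?_, hab, ?_, insert_comm _ _ _⟩ <;>
        rw [wheel_adj_iff hn] <;> omega
    · obtain ⟨a, ha, rfl⟩ := mem_image.1 hF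
      rw [mem_Icc] at ha
      obtain ⟨hne, hnot, hadj, -⟩ := two_steps hn ha.1 ha.2
      refine Or.inl ⟨a, _, _, ?_, hadj, hne.symm, hnot, rfl⟩
      have := rimSucc_spec ha.2
      rw [wheel_adj_iff hn]
      omega

/-! ### Counting the triples -/

lemma card_rimEdges {n : ℕ} (hn : 4 ≤ n) : (rimEdges n).card = n := by
  rw [rimEdges, card_image_of_injOn, Nat.card_Icc, Nat.add_sub_cancel]
  intro a ha b hb h
  simp only [coe_Icc, Set.mem_Icc] at ha hb h
  have h1 : a ∈ ({b, rimSucc n b} : Finset ℕ) := by simp [← h]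
  have h2 : rimSucc n a ∈ ({b, rimSucc n b} : Finset ℕ) := by simp [← h]
  clear h
  simp only [mem_insert, mem_singleton, rimSucc] at *
  split_ifs at * <;> omega

lemma card_rimTriples {n : ℕ} (hn : 4 ≤ n) : (rimTriples n).card = n := by
  rw [rimTriples, card_image_of_injOn, Nat.card_Icc, Nat.add_sub_cancel]
  intro a ha b hb h
  simp only [coe_Icc, Set.mem_Icc] at ha hb h
  have h1 : a ∈ ({b, rimSucc n b, rimSucc n (rimSucc n b)} : Finset ℕ) := by simp [← h]
  have h2 : rimSucc n a ∈ ({b, rimSucc n b, rimSucc n (rimSucc n b)} : Finset ℕ) := by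
    simp [← h]
  have h3 : rimSucc n (rimSucc n a) ∈ ({b, rimSucc n b, rimSucc n (rimSucc n b)} : Finset ℕ) := by
    simp [← h]
  clear h
  simp only [mem_insert, mem_singleton, rimSucc] at *
  split_ifs at * <;> omega

lemma rimEdges_subset {n : ℕ} (hn : 4 ≤ n) : rimEdges n ⊆ powersetCard 2 (Icc 1 n) := by
  intro P hP
  obtain ⟨a, ha, rfl⟩ := mem_image.1 hP
  rw [mem_Icc] at ha
  simp only [mem_powersetCard, insert_subset_iff, singleton_subset_iff, mem_Icc]
  refine ⟨?_, card_pair ?_⟩ <;> simp only [rimSucc] <;> split_ifs <;> omega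

/-- Non-adjacent pairs of rim vertices and rim edges, the latter as numerous as the rim triples,
together make up all pairs of rim vertices. -/
lemma card_hubTriples_union_rimTriples {n : ℕ} (hn : 4 ≤ n) :
    (hubTriples n ∪ rimTriples n).card = n.choose 2 := by
  have hdisj : Disjoint (hubTriples n) (rimTriples n) := by
    rw [disjoint_left]
    intro F hF hF'
    obtain ⟨a, b, -, -, -, -, -, -, -, rfl⟩ := exists_of_mem_hubTriples hn hF
    obtain ⟨c, hc, h⟩ := mem_image.1 hF'
    have : n + 1 ∈ ({c, rimSucc n c, rimSucc n (rimSucc n c)} : Finset ℕ) := by simp [h]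
    simp only [mem_insert, mem_singleton, rimSucc, mem_Icc] at *
    split_ifs at * <;> omega
  have hhub : (hubTriples n).card = n.choose 2 - n := by
    rw [hubTriples, card_image_of_injOn, card_sdiff_of_subset (rimEdges_subset hn),
      card_powersetCard, card_rimEdges hn, Nat.card_Icc, Nat.add_sub_cancel]
    intro P hP Q hQ h
    have key : ∀ R ∈ powersetCard 2 (Icc 1 n) \ rimEdges n, n + 1 ∉ R := by
      intro R hR hmem
      have := mem_Icc.1 ((mem_powersetCard.1 (mem_sdiff.1 hR).1).1 hmem)
      omega
    have h' := congrArg (fun S => S.erase (n + 1)) h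
    simpa only [erase_insert (key P hP), erase_insert (key Q hQ)] using h'
  have hle := card_le_card (rimEdges_subset hn)
  rw [card_powersetCard, card_rimEdges hn, Nat.card_Icc, Nat.add_sub_cancel] at hle
  rw [card_union_of_disjoint hdisj, hhub, card_rimTriples hn]
  omega

lemma triple_card_subset {n : ℕ} (hn : 4 ≤ n) {F : Finset ℕ}
    (hF : F ∈ hubTriples n ∪ rimTriples n) : F.card = 3 ∧ F ⊆ Icc 1 (n + 1) := by
  rcases mem_union.1 hF with hF | hF
  · obtain ⟨a, b, ha, ha', hb, hb', hab, -, -, rfl⟩ := exists_of_mem_hubTriples hn hF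
    refine ⟨card_eq_three.2 ⟨_, _, _, ?_, ?_, hab, rfl⟩, ?_⟩
    · omega
    · omega
    · simp only [insert_subset_iff, singleton_subset_iff, mem_Icc]
      omega
  · obtain ⟨a, ha, rfl⟩ := mem_image.1 hF
    rw [mem_Icc] at ha
    refine ⟨card_eq_three.2 ⟨_, _, _, ?_, ?_, ?_, rfl⟩, ?_⟩ <;>
      simp only [insert_subset_iff, singleton_subset_iff, mem_Icc, rimSucc] <;>
      split_ifs <;> omega

/-! ### Faces of each dimension -/

/-- Every pair of vertices of the wheel lies in a Gallai index, so the 1-skeleton is complete. -/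
lemma exists_triple_of_ne {n a b : ℕ} (hn : 4 ≤ n) (ha : a ∈ Icc 1 (n + 1))
    (hb : b ∈ Icc 1 (n + 1)) (hab : a ≠ b) :
    ∃ A ∈ hubTriples n ∪ rimTriples n, ({a, b} : Finset ℕ) ⊆ A := by
  rw [mem_Icc] at ha hb
  simp only [mem_union, insert_subset_iff, singleton_subset_iff]
  -- A spoke at `c` lies in the hub triple of `c` and the vertex two steps further along the rim.
  have hubCase : ∀ c, 1 ≤ c → c ≤ n →
      ({n + 1, c, rimSucc n (rimSucc n c)} : Finset ℕ) ∈ hubTriples n := by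
    intro c hc hc'
    apply insert_hub_mem_hubTriples hn <;>
      first | omega | (simp only [rimSucc]; split_ifs <;> omega)
  by_cases ha1 : a = n + 1
  · exact ⟨_, Or.inl (hubCase b (by omega) (by omega)), by simp [ha1], by simp⟩
  by_cases hb1 : b = n + 1
  · exact ⟨_, Or.inl (hubCase a (by omega) (by omega)), by simp, by simp [hb1]⟩
  by_cases h1 : b = rimSucc n a
  · exact ⟨_, Or.inr (rimTriple_mem (n := n) (a := a) (by omega) (by omega)), by simp, by simp [h1]⟩
  by_cases h2 : a = rimSucc n b
  · exact ⟨_, Or.inr (rimTriple_mem (n := n) (a := b) (by omega) (by omega)), by simp [h2], by simp⟩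
  exact ⟨_, Or.inl (insert_hub_mem_hubTriples (a := a) (b := b) hn (by omega) (by omega) (by omega)
    (by omega) hab h1 h2), by simp, by simp⟩

lemma mem_gallaiComplex_wheel {n : ℕ} (hn : 4 ≤ n) (F : Finset ℕ) :
    F ∈ gallaiComplex (wheelGraph n) ↔ ∃ A ∈ hubTriples n ∪ rimTriples n, F ⊆ A := by
  simp only [gallaiComplex, complexOf, Set.mem_ofPred_eq, mem_gallai_wheel hn]

lemma faces_one {n : ℕ} (hn : 4 ≤ n) :
    {F ∈ gallaiComplex (wheelGraph n) | F.card = 0 + 1} = ↑(powersetCard 1 (Icc 1 (n + 1))) := by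
  ext F
  simp only [Set.mem_ofPred_eq, mem_gallaiComplex_wheel hn, mem_coe, mem_powersetCard, zero_add]
  constructor
  · rintro ⟨⟨A, hA, hFA⟩, hF⟩
    exact ⟨hFA.trans (triple_card_subset hn hA).2, hF⟩
  · rintro ⟨hsub, hF⟩
    refine ⟨?_, hF⟩
    obtain ⟨a, rfl⟩ := card_eq_one.1 hF
    have ha := hsub (mem_singleton_self a)
    obtain ⟨b, hb, hab⟩ : ∃ b ∈ Icc 1 (n + 1), a ≠ b := by
      by_cases h : a = 1
      · exact ⟨2, mem_Icc.2 (by omega), by omega⟩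
      · exact ⟨1, mem_Icc.2 (by omega), h⟩
    obtain ⟨A, hA, h⟩ := exists_triple_of_ne hn ha hb hab
    exact ⟨A, hA, fun x hx => h (by simp_all)⟩

lemma faces_two {n : ℕ} (hn : 4 ≤ n) :
    {F ∈ gallaiComplex (wheelGraph n) | F.card = 1 + 1} = ↑(powersetCard 2 (Icc 1 (n + 1))) := by
  ext F
  simp only [Set.mem_ofPred_eq, mem_gallaiComplex_wheel hn, mem_coe, mem_powersetCard]
  constructor
  · rintro ⟨⟨A, hA, hFA⟩, hF⟩
    exact ⟨hFA.trans (triple_card_subset hn hA).2, hF⟩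
  · rintro ⟨hsub, hF⟩
    refine ⟨?_, hF⟩
    obtain ⟨a, b, hab, rfl⟩ := card_eq_two.1 hF
    exact exists_triple_of_ne hn (hsub (by simp)) (hsub (by simp)) hab

lemma faces_three {n : ℕ} (hn : 4 ≤ n) :
    {F ∈ gallaiComplex (wheelGraph n) | F.card = 2 + 1} = ↑(hubTriples n ∪ rimTriples n) := by
  ext F
  rw [Set.mem_ofPred_eq, mem_gallaiComplex_wheel hn, mem_coe]
  constructor
  · rintro ⟨⟨A, hA, hFA⟩, hF⟩
    rwa [eq_of_subset_of_card_le hFA (by rw [(triple_card_subset hn hA).1, hF])]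
  · intro hF
    exact ⟨⟨F, hF, Subset.rfl⟩, (triple_card_subset hn hF).1⟩

lemma faces_large {n : ℕ} (hn : 4 ≤ n) {k : ℕ} (hk : 3 ≤ k) :
    {F ∈ gallaiComplex (wheelGraph n) | F.card = k + 1} = ∅ := by
  ext F
  rw [Set.mem_ofPred_eq, mem_gallaiComplex_wheel hn]
  simp only [Set.mem_empty_iff_false, iff_false]
  rintro ⟨⟨A, hA, hFA⟩, hF⟩
  have := card_le_card hFA
  rw [(triple_card_subset hn hA).1] at this
  omega

/-- For `n ≥ 4`, `χ(Δ_Γ(W_{n+1})) = 1`. -/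
theorem stmt9 (n : ℕ) (hn : 4 ≤ n) :
    eulerChar (gallaiComplex (wheelGraph n)) = 1 := by
  rw [eulerChar, finsum_eq_sum_of_support_subset (s := range 3)]
  · rw [sum_range_succ, sum_range_succ, sum_range_succ, sum_range_zero, faces_one hn,
      faces_two hn, faces_three hn]
    simp only [Set.ncard_coe_finset, card_powersetCard, Nat.card_Icc, Nat.add_sub_cancel,
      card_hubTriples_union_rimTriples hn]
    have : (n + 1).choose 2 = n.choose 1 + n.choose 2 := Nat.choose_succ_succ n 1
    rw [this]
    simp only [Nat.choose_one_right]
    push_cast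
    ring
  · intro k hk
    by_contra hk'
    apply hk
    have : 3 ≤ k := by simpa using hk'
    simp [faces_large hn this]
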